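/- arXiv:2408.17350 — 17 statements merged into one kernel-verified Lean document; each statement's English description precedes it below -/
import Mathlib

section
/- Let X be a real vector space and ⟦·,·⟧ a weak pairing on X. Then the function ‖x‖ := sqrt(⟦x,x⟧) is a norm on X: it is positive definite (‖x‖ > 0 for x ≠ 0 and ‖0‖ = 0), absolutely homogeneous (‖αx‖ = |α|·‖x‖ for all α ∈ ℝ), and satisfies the triangle inequality ‖x+y‖ ≤ ‖x‖ + ‖y‖. -/
open Filter Topology MeasureTheory

/-- A weak pairing on a real vector space `X`. -/
structure WeakPairing (X : Type*) [AddCommGroup X] [Module ℝ X] where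
  pair : X → X → ℝ
  subadd : ∀ x₁ x₂ y : X, pair (x₁ + x₂) y ≤ pair x₁ y + pair x₂ y
  smul_left : ∀ (α : ℝ), 0 ≤ α → ∀ x y : X, pair (α • x) y = α * pair x y
  smul_right : ∀ (α : ℝ), 0 ≤ α → ∀ x y : X, pair x (α • y) = α * pair x y
  neg_neg_eq : ∀ x y : X, pair (-x) (-y) = pair x y
  pos_def : ∀ x : X, x ≠ 0 → 0 < pair x x
  cauchy_schwarz : ∀ x y : X, pair x y ≤ Real.sqrt (pair x x * pair y y)

/-- the function `x ↦ √⟦x,x⟧` induced by a weak pairing is a norm. -/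
theorem weakPairing_induces_norm (X : Type*) [AddCommGroup X] [Module ℝ X]
    (P : WeakPairing X) (N : X → ℝ) (hN : ∀ z : X, N z = Real.sqrt (P.pair z z)) :
    (∀ x : X, x ≠ 0 → 0 < N x) ∧ (N (0 : X) = 0) ∧
    (∀ (α : ℝ) (x : X), N (α • x) = |α| * N x) ∧
    (∀ x y : X, N (x + y) ≤ N x + N y) := by
  have h0 : P.pair 0 0 = 0 := by
    have := P.smul_left 0 le_rfl 0 0
    simpa using this
  have hnn : ∀ x : X, 0 ≤ P.pair x x := by
    intro x
    by_cases hx : x = 0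
    · rw [hx, h0]
    · exact (P.pos_def x hx).le
  have hpos : ∀ (α : ℝ), 0 ≤ α → ∀ x : X, N (α • x) = α * N x := by
    intro α hα x
    rw [hN, hN, P.smul_left α hα, P.smul_right α hα, ← mul_assoc,
      Real.sqrt_mul (mul_self_nonneg α), Real.sqrt_mul_self hα]
  have hneg : ∀ x : X, N (-x) = N x := by
    intro x
    rw [hN, hN, P.neg_neg_eq]
  have hNn : ∀ x : X, 0 ≤ N x := fun x => by rw [hN]; exact Real.sqrt_nonneg _
  have hcs : ∀ x y : X, P.pair x y ≤ N x * N y := by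
    intro x y
    rw [hN, hN, ← Real.sqrt_mul (hnn x)]
    exact P.cauchy_schwarz x y
  refine ⟨?_, ?_, ?_, ?_⟩
  · intro x hx
    rw [hN]
    exact Real.sqrt_pos.mpr (P.pos_def x hx)
  · rw [hN, h0, Real.sqrt_zero]
  · intro α x
    rcases le_total 0 α with hα | hα
    · rw [hpos α hα, abs_of_nonneg hα]
    · rw [abs_of_nonpos hα, ← hpos (-α) (by linarith), neg_smul, hneg]
  · intro x y
    have h1 := P.subadd x y (x + y)
    have h2 := hcs x (x + y)
    have h3 := hcs y (x + y)
    have h4 : N (x + y) * N (x + y) = P.pair (x + y) (x + y) := by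
      rw [hN]
      exact Real.mul_self_sqrt (hnn _)
    by_contra! h
    have h5 := hNn x
    have h6 := hNn y
    nlinarith
end

section
/- Let (X,‖·‖) be a real normed space, a < b real numbers, and x : (a,b) → X a curve differentiable at t ∈ (a,b) with derivative v. Let f(s) := ‖x(s)‖. Suppose L₊ and L₋ are real numbers such that (‖x(t)+hv‖−‖x(t)‖)/h → L₊ as h → 0⁺ and (‖x(t)+hv‖−‖x(t)‖)/h → L₋ as h → 0⁻. Then f(t)·limsup_{h→0⁺}(f(t+h)−f(t))/h = f(t)·liminf_{h→0⁺}(f(t+h)−f(t))/h = ‖x(t)‖·L₊, and f(t)·limsup_{h→0⁻}(f(t+h)−f(t))/h = f(t)·liminf_{h→0⁻}(f(t+h)−f(t))/h = ‖x(t)‖·L₋. In particular, if f(t) ≠ 0 then the one-sided derivatives of f at t exist and equal L₊ and L₋ respectively. -/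
open Filter Topology

theorem dini_aux
    {X : Type*} [NormedAddCommGroup X] [NormedSpace ℝ X]
    (x : ℝ → X) (t : ℝ) (v : X) (hx : HasDerivAt x v t) (L : ℝ) (l : Filter ℝ)
    (hl : l ≤ 𝓝[≠] (0:ℝ))
    (hL : Tendsto (fun h : ℝ => (‖x t + h • v‖ - ‖x t‖) / h) l (𝓝 L)) :
    Tendsto (fun h : ℝ => (‖x (t + h)‖ - ‖x t‖) / h) l (𝓝 L) := by
  have h1 := (hasDerivAt_iff_tendsto_slope_zero.mp hx).mono_left hl
  have h2 : Tendsto (fun h : ℝ => ‖h⁻¹ • (x (t + h) - x t) - v‖) l (𝓝 0) := by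
    have h3 := (h1.sub_const v).norm
    simpa using h3
  have h4 : Tendsto (fun h : ℝ => (‖x (t + h)‖ - ‖x t + h • v‖) / h) l (𝓝 0) := by
    apply squeeze_zero_norm' _ h2
    have hne : ∀ᶠ h in l, h ≠ 0 := hl self_mem_nhdsWithin
    filter_upwards [hne] with h hh
    have e : h⁻¹ • (x (t + h) - x t) - v = h⁻¹ • (x (t + h) - (x t + h • v)) := by
      rw [← sub_sub, smul_sub h⁻¹ (x (t + h) - x t), smul_smul, inv_mul_cancel₀ hh, one_smul]
    rw [e, norm_smul, norm_div, norm_inv, div_eq_inv_mul]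
    gcongr
    exact abs_norm_sub_norm_le _ _
  have h5 := h4.add hL
  rw [zero_add] at h5
  refine h5.congr fun h => ?_
  ring

/-- Dini derivatives of the norm of a differentiable curve are
expressed through the upper and lower JMT pairings; in particular, away from
zeros of the norm, the one-sided derivatives of `t ↦ ‖x(t)‖` exist. -/
theorem dini_derivatives_eq_JMT_pairings
    (X : Type*) [NormedAddCommGroup X] [NormedSpace ℝ X]
    (a b : ℝ) (hab : a < b) (x : ℝ → X) (t : ℝ) (ht : t ∈ Set.Ioo a b)
    (v : X) (hx : HasDerivAt x v t)
    (f : ℝ → ℝ) (hf : ∀ s : ℝ, f s = ‖x s‖)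
    (Lp Lm : ℝ)
    (hLp : Tendsto (fun h : ℝ => (‖x t + h • v‖ - ‖x t‖) / h) (𝓝[>] (0:ℝ)) (𝓝 Lp))
    (hLm : Tendsto (fun h : ℝ => (‖x t + h • v‖ - ‖x t‖) / h) (𝓝[<] (0:ℝ)) (𝓝 Lm)) :
    f t * limsup (fun h : ℝ => (f (t + h) - f t) / h) (𝓝[>] (0:ℝ)) = ‖x t‖ * Lp ∧
    f t * liminf (fun h : ℝ => (f (t + h) - f t) / h) (𝓝[>] (0:ℝ)) = ‖x t‖ * Lp ∧
    f t * limsup (fun h : ℝ => (f (t + h) - f t) / h) (𝓝[<] (0:ℝ)) = ‖x t‖ * Lm ∧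
    f t * liminf (fun h : ℝ => (f (t + h) - f t) / h) (𝓝[<] (0:ℝ)) = ‖x t‖ * Lm ∧
    (f t ≠ 0 →
      Tendsto (fun h : ℝ => (f (t + h) - f t) / h) (𝓝[>] (0:ℝ)) (𝓝 Lp) ∧
      Tendsto (fun h : ℝ => (f (t + h) - f t) / h) (𝓝[<] (0:ℝ)) (𝓝 Lm)) := by
  have hp := dini_aux x t v hx Lp (𝓝[>] (0:ℝ)) (nhdsWithin_mono _ fun y hy => ne_of_gt hy) hLp
  have hm := dini_aux x t v hx Lm (𝓝[<] (0:ℝ)) (nhdsWithin_mono _ fun y hy => ne_of_lt hy) hLm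
  simp only [hf]
  rw [hp.limsup_eq, hp.liminf_eq, hm.limsup_eq, hm.liminf_eq]
  exact ⟨rfl, rfl, rfl, rfl, fun _ => ⟨hp, hm⟩⟩
end

section
/- Let (X,‖·‖) be a real normed space, a < b real numbers, and x : (a,b) → X a curve differentiable at every point of (a,b). Then the function f(t) := ‖x(t)‖ is differentiable at almost every t ∈ (a,b) (with respect to Lebesgue measure). -/
open Filter Topology MeasureTheory

lemma aux_minorant (f : ℝ → ℝ) (I E : Set ℝ) (K : NNReal) (hEI : E ⊆ I)
    (hE : ∀ t ∈ E, ∀ y ∈ I, |f y - f t| ≤ K * |y - t|) (hne : E.Nonempty) :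
    ∃ u : ℝ → ℝ, LipschitzWith K u ∧ (∀ s ∈ I, u s ≤ f s) ∧ ∀ s ∈ E, u s = f s := by
  haveI : Nonempty E := hne.to_subtype
  have hK : (0 : ℝ) ≤ K := K.2
  have key : ∀ y ∈ E, ∀ z ∈ I, ∀ s, f y - K * |s - y| ≤ f z + K * |s - z| := by
    intro y hy z hz s
    have h1 := (abs_le.1 (hE y hy z hz)).1
    have h2 : |z - y| ≤ |s - y| + |s - z| := by
      have := abs_sub_le z s y
      rw [abs_sub_comm z s] at this
      linarith
    nlinarith [mul_le_mul_of_nonneg_left h2 hK]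
  have bdd : ∀ s : ℝ, BddAbove (Set.range fun y : E => f y - K * |s - (y : ℝ)|) := by
    intro s
    obtain ⟨z, hz⟩ := hne
    refine ⟨f z + K * |s - z|, ?_⟩
    rintro _ ⟨y, rfl⟩
    exact key y y.2 z (hEI hz) s
  have hle : ∀ s ∈ I, (⨆ y : E, (f y - K * |s - (y : ℝ)|)) ≤ f s := by
    intro s hs
    refine ciSup_le fun y => ?_
    have := key y y.2 s hs s
    simpa using this
  refine ⟨fun s => ⨆ y : E, (f y - K * |s - (y : ℝ)|), ?_, hle, ?_⟩
  · refine LipschitzWith.of_le_add_mul K fun s r => ?_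
    refine ciSup_le fun y => ?_
    have h1 := le_ciSup (bdd r) y
    have h2 := mul_le_mul_of_nonneg_left (abs_sub_le r s y) hK
    rw [Real.dist_eq, abs_sub_comm s r]
    linarith
  · intro s hs
    refine le_antisymm (hle s (hEI hs)) ?_
    have h1 := le_ciSup (bdd s) ⟨s, hs⟩
    simpa using h1

lemma aux_squeeze (u f v : ℝ → ℝ) (t : ℝ) (hu : DifferentiableAt ℝ u t)
    (hv : DifferentiableAt ℝ v t) (h : ∀ᶠ s in 𝓝 t, u s ≤ f s ∧ f s ≤ v s)
    (hut : u t = f t) (hvt : v t = f t) : DifferentiableAt ℝ f t := by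
  have h1 := hu.hasDerivAt
  have h2 := hv.hasDerivAt
  have hmin : IsLocalMin (v - u) t := by
    filter_upwards [h] with s hs
    simp only [Pi.sub_apply]
    linarith
  have h0 := hmin.hasDerivAt_eq_zero (h2.sub h1)
  have he : deriv v t = deriv u t := by linarith
  rw [he] at h2
  refine HasDerivAt.differentiableAt (f' := deriv u t) ?_
  rw [hasDerivAt_iff_isLittleO] at *
  refine Asymptotics.IsBigO.trans_isLittleO ?_ (h1.norm_left.add h2.norm_left)
  refine Asymptotics.IsBigO.of_bound 1 ?_
  filter_upwards [h] with s hs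
  simp only [Real.norm_eq_abs, smul_eq_mul, one_mul]
  rw [abs_of_nonneg (a := |_| + |_|) (by positivity)]
  rw [hut, hvt]
  have a1 := neg_abs_le (u s - f t - (s - t) * deriv u t)
  have a2 := le_abs_self (v s - f t - (s - t) * deriv u t)
  have a3 := abs_nonneg (u s - f t - (s - t) * deriv u t)
  have a4 := abs_nonneg (v s - f t - (s - t) * deriv u t)
  rw [abs_le]
  constructor <;> linarith

lemma aux_ae (f : ℝ → ℝ) (I : Set ℝ) (hI : IsOpen I) (K : NNReal) :
    ∀ᵐ t ∂(volume : Measure ℝ), t ∈ I → (∀ y ∈ I, |f y - f t| ≤ K * |y - t|) →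
      DifferentiableAt ℝ f t := by
  set E : Set ℝ := {t | t ∈ I ∧ ∀ y ∈ I, |f y - f t| ≤ K * |y - t|} with hEdef
  by_cases hne : E.Nonempty
  · obtain ⟨u, hu, hu1, hu2⟩ := aux_minorant f I E K (fun t ht => ht.1) (fun t ht => ht.2) hne
    obtain ⟨v, hv, hv1, hv2⟩ := aux_minorant (fun s => - f s) I E K (fun t ht => ht.1)
      (fun t ht y hy => by
        have := ht.2 y hy
        rwa [← abs_neg, show -(-f y - -f t) = f y - f t by ring]) hne
    filter_upwards [hu.ae_differentiableAt_real, hv.ae_differentiableAt_real] with t h1 h2 ht ht2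
    refine aux_squeeze u f (fun s => - v s) t h1 h2.neg ?_ (hu2 t ⟨ht, ht2⟩) ?_
    · filter_upwards [hI.mem_nhds ht] with s hs
      exact ⟨hu1 s hs, by linarith [hv1 s hs]⟩
    · simp [hv2 t ⟨ht, ht2⟩]
  · refine Eventually.of_forall fun t h1 h2 => ?_
    exact absurd ⟨t, h1, h2⟩ hne

/-- the norm of a curve differentiable on `(a,b)` is
differentiable almost everywhere on `(a,b)`. -/
theorem curve_norm_differentiable_ae
    (X : Type*) [NormedAddCommGroup X] [NormedSpace ℝ X]
    (a b : ℝ) (hab : a < b) (x : ℝ → X)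
    (hx : ∀ s ∈ Set.Ioo a b, DifferentiableAt ℝ x s)
    (f : ℝ → ℝ) (hf : ∀ s : ℝ, f s = ‖x s‖) :
    ∀ᵐ t ∂(volume : Measure ℝ), t ∈ Set.Ioo a b → DifferentiableAt ℝ f t := by
  have H : ∀ᵐ t ∂(volume : Measure ℝ), ∀ (p q : ℚ) (n : ℕ), t ∈ Set.Ioo (p : ℝ) q →
      (∀ y ∈ Set.Ioo (p : ℝ) q, |f y - f t| ≤ ((n : NNReal) : ℝ) * |y - t|) →
      DifferentiableAt ℝ f t := by
    rw [ae_all_iff]; intro p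
    rw [ae_all_iff]; intro q
    rw [ae_all_iff]; intro n
    exact aux_ae f _ isOpen_Ioo n
  filter_upwards [H] with t ht hts
  obtain ⟨C, hC⟩ := (hx t hts).isBigO_sub.bound
  obtain ⟨n, hn⟩ := exists_nat_ge C
  obtain ⟨l, r, hlr, hsub⟩ := mem_nhds_iff_exists_Ioo_subset.1 hC
  obtain ⟨p, hp1, hp2⟩ := exists_rat_btwn hlr.1
  obtain ⟨q, hq1, hq2⟩ := exists_rat_btwn hlr.2
  refine ht p q n ⟨hp2, hq1⟩ fun y hy => ?_
  have h1 : ‖x y - x t‖ ≤ C * ‖y - t‖ := hsub ⟨hp1.trans hy.1, hy.2.trans hq2⟩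
  rw [hf, hf]
  refine (abs_norm_sub_norm_le _ _).trans (h1.trans ?_)
  rw [Real.norm_eq_abs]
  push_cast
  exact mul_le_mul_of_nonneg_right hn (abs_nonneg _)
end

section
/- Let (X,‖·‖) be a real normed space and ⟦·,·⟧ a weak pairing on X compatible with the norm. If ⟦·,·⟧ satisfies the straight angle property (⟦−x,x⟧ = −‖x‖² for all x ∈ X), then it is partially linear in its first argument: ⟦x+ay,y⟧ = ⟦x,y⟧ + a·‖y‖² for all x,y ∈ X and all a ∈ ℝ. -/
open Filter Topology MeasureTheory

/-- the straight angle property implies partial linearity in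
the first argument. -/
theorem straight_angle_implies_partial_linearity
    (X : Type*) [NormedAddCommGroup X] [NormedSpace ℝ X]
    (P : WeakPairing X) (hcompat : ∀ x : X, P.pair x x = ‖x‖ ^ 2)
    (hstraight : ∀ x : X, P.pair (-x) x = -‖x‖ ^ 2) :
    ∀ (x y : X) (a : ℝ), P.pair (x + a • y) y = P.pair x y + a * ‖y‖ ^ 2 := by
  have key : ∀ (y : X) (a : ℝ), P.pair (a • y) y = a * ‖y‖ ^ 2 := by
    intro y a
    rcases le_total 0 a with h | h
    · rw [P.smul_left a h, hcompat]
    · have e : a • y = (-a) • (-y) := by simp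
      rw [e, P.smul_left (-a) (by linarith), hstraight]
      ring
  intro x y a
  have h1 := P.subadd x (a • y) y
  have h2 := P.subadd (x + a • y) ((-a) • y) y
  have e : x + a • y + (-a) • y = x := by simp
  rw [e, key] at h2
  rw [key] at h1
  linarith
end

section
/- Let (X,‖·‖) be a real normed space and ⟦·,·⟧ a weak pairing on X compatible with the norm which is partially linear in its first argument, i.e. ⟦x+ay,y⟧ = ⟦x,y⟧ + a·‖y‖² for all x,y ∈ X, a ∈ ℝ. Then for all x,y ∈ X: ⟦x,y⟧₋ ≤ −⟦−x,y⟧ ≤ ⟦x,y⟧ ≤ ⟦x,y⟧₊, where ⟦·,·⟧₊ and ⟦·,·⟧₋ are the upper and lower JMT pairings of the norm ‖·‖. -/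
open Filter Topology MeasureTheory

/-- a partially linear weak pairing compatible with the norm is
sandwiched between the lower and upper JMT pairings of the norm. -/
theorem partial_linearity_implies_JMT_domination
    (X : Type*) [NormedAddCommGroup X] [NormedSpace ℝ X]
    (P : WeakPairing X) (hcompat : ∀ x : X, P.pair x x = ‖x‖ ^ 2)
    (hlin : ∀ (x y : X) (a : ℝ), P.pair (x + a • y) y = P.pair x y + a * ‖y‖ ^ 2)
    (Jp Jm : X → X → ℝ)
    (hJp : ∀ x y : X, Tendsto (fun h : ℝ => ‖y‖ * ((‖y + h • x‖ - ‖y‖) / h))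
      (𝓝[>] (0:ℝ)) (𝓝 (Jp x y)))
    (hJm : ∀ x y : X, Tendsto (fun h : ℝ => ‖y‖ * ((‖y + h • x‖ - ‖y‖) / h))
      (𝓝[<] (0:ℝ)) (𝓝 (Jm x y))) :
    ∀ x y : X, Jm x y ≤ -P.pair (-x) y ∧ -P.pair (-x) y ≤ P.pair x y ∧
      P.pair x y ≤ Jp x y := by
  have key : ∀ (x y : X) (h : ℝ), 0 < h →
      P.pair x y ≤ ‖y‖ * ((‖y + h • x‖ - ‖y‖) / h) := by
    intro x y h hh
    have h1 := hlin (h • x) y 1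
    have h2 := P.cauchy_schwarz (h • x + (1:ℝ) • y) y
    rw [h1, P.smul_left h hh.le, hcompat, hcompat, ← mul_pow,
      Real.sqrt_sq (by positivity), one_smul, add_comm (h • x) y] at h2
    rw [← mul_div_assoc, le_div_iff₀ hh]
    nlinarith
  intro x y
  refine ⟨?_, ?_, ?_⟩
  · refine le_of_tendsto (hJm x y) ?_
    filter_upwards [self_mem_nhdsWithin] with h hh
    have hh' : h < 0 := hh
    have := key (-x) y (-h) (by linarith)
    rw [neg_smul_neg, div_neg, mul_neg] at this
    linarith
  · have h0 := P.subadd x (-x) y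
    have h1 := P.smul_left 0 le_rfl x y
    rw [zero_smul, zero_mul] at h1
    rw [add_neg_cancel, h1] at h0
    linarith
  · refine ge_of_tendsto (hJp x y) ?_
    filter_upwards [self_mem_nhdsWithin] with h hh
    exact key x y h hh
end

section
/- Let (X,‖·‖) be a real normed space and ⟦·,·⟧ a weak pairing on X compatible with the norm satisfying ⟦x,y⟧ ≤ ⟦x,y⟧₊ for all x,y ∈ X, where ⟦·,·⟧₊ is the upper JMT pairing of the norm. Let A : X → X be a bounded linear operator and μ(A) a real number such that (‖Id+hA‖−1)/h → μ(A) as h → 0⁺ (operator norm). Then ⟦Ax,x⟧ ≤ μ(A) for every x ∈ X with ‖x‖ = 1. -/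
open Filter Topology MeasureTheory

/-- a weak pairing dominated by the upper JMT pairing satisfies
the one-sided Lumer inequality `⟦Ax,x⟧ ≤ μ(A)` for unit vectors `x`. -/
theorem JMT_domination_implies_one_sided_lumer
    (X : Type*) [NormedAddCommGroup X] [NormedSpace ℝ X]
    (P : WeakPairing X) (hcompat : ∀ x : X, P.pair x x = ‖x‖ ^ 2)
    (hdom : ∀ (x y : X) (L : ℝ),
      Tendsto (fun h : ℝ => (‖y + h • x‖ - ‖y‖) / h) (𝓝[>] (0:ℝ)) (𝓝 L) →
      P.pair x y ≤ ‖y‖ * L)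
    (A : X →L[ℝ] X) (μ : ℝ)
    (hμ : Tendsto (fun h : ℝ => (‖ContinuousLinearMap.id ℝ X + h • A‖ - 1) / h)
      (𝓝[>] (0:ℝ)) (𝓝 μ)) :
    ∀ x : X, ‖x‖ = 1 → P.pair (A x) x ≤ μ := by
  intro x hx
  have hc : ConvexOn ℝ Set.univ (fun h : ℝ => ‖x + h • A x‖) := by
    refine ⟨convex_univ, fun s _ t _ a b ha hb hab => ?_⟩
    have h1 : x + (a • s + b • t) • A x = a • (x + s • A x) + b • (x + t • A x) := by
      have h2 : x = a • x + b • x := by rw [← add_smul, hab, one_smul]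
      calc x + (a • s + b • t) • A x = (a • x + b • x) + (a • s + b • t) • A x := by rw [← h2]
        _ = _ := by simp only [smul_eq_mul]; module
    simp only []
    rw [h1]
    refine (norm_add_le _ _).trans ?_
    rw [norm_smul, norm_smul, Real.norm_of_nonneg ha, Real.norm_of_nonneg hb]
    simp
  have hd := hc.hasDerivWithinAt_rightDeriv_of_mem_interior (x := 0) (by simp)
  rw [hasDerivWithinAt_iff_tendsto_slope' (by simp)] at hd
  generalize derivWithin (fun h : ℝ => ‖x + h • A x‖) (Set.Ioi 0) 0 = L at hd
  have hL : Tendsto (fun h : ℝ => (‖x + h • A x‖ - ‖x‖) / h) (𝓝[>] (0:ℝ)) (𝓝 L) := by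
    refine hd.congr fun h => ?_
    simp [slope_def_field]
  have h1 := hdom (A x) x L hL
  rw [hx, one_mul] at h1
  refine h1.trans (le_of_tendsto_of_tendsto hL hμ ?_)
  filter_upwards [self_mem_nhdsWithin] with h hh
  have hh' : (0:ℝ) < h := hh
  have h3 := (ContinuousLinearMap.id ℝ X + h • A).le_opNorm x
  simp only [ContinuousLinearMap.add_apply, ContinuousLinearMap.smul_apply,
    ContinuousLinearMap.id_apply, hx, mul_one] at h3
  rw [hx]
  gcongr
end

section
/- Let (X,‖·‖) be a real normed space and ⟦·,·⟧ a weak pairing on X compatible with the norm. Suppose that for every bounded linear operator A : X → X and every real number μ(A) with (‖Id+hA‖−1)/h → μ(A) as h → 0⁺ (operator norm), one has ⟦Ax,x⟧ ≤ μ(A) for all x ∈ X with ‖x‖ = 1. Then ⟦·,·⟧ satisfies the straight angle property: ⟦−x,x⟧ = −‖x‖² for all x ∈ X. -/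
open Filter Topology MeasureTheory

/-- if the one-sided Lumer inequality holds for all bounded
operators, then the weak pairing satisfies the straight angle property. -/
theorem one_sided_lumer_implies_straight_angle
    (X : Type*) [NormedAddCommGroup X] [NormedSpace ℝ X]
    (P : WeakPairing X) (hcompat : ∀ x : X, P.pair x x = ‖x‖ ^ 2)
    (hlumer : ∀ (A : X →L[ℝ] X) (μ : ℝ),
      Tendsto (fun h : ℝ => (‖ContinuousLinearMap.id ℝ X + h • A‖ - 1) / h)
        (𝓝[>] (0:ℝ)) (𝓝 μ) →
      ∀ x : X, ‖x‖ = 1 → P.pair (A x) x ≤ μ) :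
    ∀ x : X, P.pair (-x) x = -‖x‖ ^ 2 := by
  have hunit : ∀ u : X, ‖u‖ = 1 → P.pair (-u) u ≤ -1 := by
    intro u hu
    have hne : u ≠ 0 := by
      intro h
      simp [h] at hu
    haveI : Nontrivial X := ⟨u, 0, hne⟩
    have := hlumer (-ContinuousLinearMap.id ℝ X) (-1) ?_ u hu
    · simpa using this
    · refine tendsto_const_nhds.congr' ?_
      filter_upwards [Ioo_mem_nhdsGT (show (0:ℝ) < 1 by norm_num)] with h hh
      have e : ContinuousLinearMap.id ℝ X + h • (-ContinuousLinearMap.id ℝ X)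
          = (1 - h) • ContinuousLinearMap.id ℝ X := by
        rw [sub_smul, one_smul, smul_neg, sub_eq_add_neg]
      have h0 : h ≠ 0 := hh.1.ne'
      rw [e, norm_smul, ContinuousLinearMap.norm_id, Real.norm_eq_abs,
        abs_of_pos (by linarith [hh.2])]
      field_simp
      ring
  intro x
  have hz : P.pair 0 x = 0 := by
    have := P.smul_left 0 le_rfl 0 x
    simpa using this
  have hlow : 0 ≤ P.pair x x + P.pair (-x) x := by
    have := P.subadd x (-x) x
    rwa [add_neg_cancel, hz] at this
  rw [hcompat] at hlow
  by_cases hx : x = 0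
  · subst hx
    simp [hz]
  · have hn : ‖x‖ ≠ 0 := norm_ne_zero_iff.mpr hx
    have hu : ‖(‖x‖⁻¹ • x)‖ = 1 := by
      rw [norm_smul, norm_inv, norm_norm, inv_mul_cancel₀ hn]
    have h1 := hunit _ hu
    have hi : 0 ≤ ‖x‖⁻¹ := inv_nonneg.mpr (norm_nonneg x)
    rw [← smul_neg, P.smul_left _ hi, P.smul_right _ hi] at h1
    have h2 := mul_le_mul_of_nonneg_left h1 (sq_nonneg ‖x‖)
    have h3 : ‖x‖ ^ 2 * (‖x‖⁻¹ * (‖x‖⁻¹ * P.pair (-x) x)) = P.pair (-x) x := by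
      field_simp
    rw [h3] at h2
    linarith
end

section
/- Let (X,‖·‖) be a real normed space and ⟦·,·⟧ a weak pairing on X compatible with the norm satisfying ⟦x,y⟧ ≤ ⟦x,y⟧₊ for all x,y ∈ X, where ⟦·,·⟧₊ is the upper JMT pairing of the norm. Then the curve norm derivative formula holds: for every curve x : (a,b) → X differentiable at every point and every t ∈ (a,b) at which the function f(s) := ‖x(s)‖ is differentiable, one has f(t)·f′(t) = ⟦x′(t), x(t)⟧. -/
open Filter Topology MeasureTheory

/-- a weak pairing dominated by the upper JMT pairing satisfies
the curve norm derivative formula `f(t)·f′(t) = ⟦x′(t), x(t)⟧`. -/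
theorem JMT_domination_implies_curve_norm_derivative
    (X : Type*) [NormedAddCommGroup X] [NormedSpace ℝ X]
    (P : WeakPairing X) (hcompat : ∀ x : X, P.pair x x = ‖x‖ ^ 2)
    (hdom : ∀ (x y : X) (L : ℝ),
      Tendsto (fun h : ℝ => (‖y + h • x‖ - ‖y‖) / h) (𝓝[>] (0:ℝ)) (𝓝 L) →
      P.pair x y ≤ ‖y‖ * L) :
    ∀ (a b : ℝ) (x : ℝ → X), (∀ s ∈ Set.Ioo a b, DifferentiableAt ℝ x s) →
      ∀ t ∈ Set.Ioo a b, DifferentiableAt ℝ (fun s => ‖x s‖) t →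
      ‖x t‖ * deriv (fun s => ‖x s‖) t = P.pair (deriv x t) (x t) := by
  intro a b x hx t ht hf
  have hv := (hx t ht).hasDerivAt
  have hd := hf.hasDerivAt
  set v := deriv x t
  set d := deriv (fun s => ‖x s‖) t
  have key : HasDerivAt (fun h : ℝ => ‖x t + h • v‖) d 0 := by
    rw [hasDerivAt_iff_isLittleO_nhds_zero] at hv hd ⊢
    have h3 : (fun h : ℝ => ‖x t + h • v‖ - ‖x (t + h)‖) =o[𝓝 0] (fun h : ℝ => h) := by
      refine Asymptotics.IsBigO.trans_isLittleO (Asymptotics.IsBigO.of_bound 1 ?_) hv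
      refine Eventually.of_forall fun h => ?_
      rw [one_mul, Real.norm_eq_abs, abs_sub_comm]
      refine (abs_norm_sub_norm_le _ _).trans (le_of_eq ?_)
      rw [sub_sub]
    refine (h3.add hd).congr_left fun h => ?_
    simp only [zero_add, zero_smul, add_zero]
    ring
  have keyn : HasDerivAt (fun h : ℝ => ‖x t + h • (-v)‖) (-d) 0 := by
    have h0 : HasDerivAt (fun h : ℝ => ‖x t + h • v‖) d (-0) := by simpa using key
    have := h0.scomp (0:ℝ) (hasDerivAt_neg (0:ℝ))
    simpa [Function.comp_def] using this
  have lim : ∀ (w : X) (e : ℝ), HasDerivAt (fun h : ℝ => ‖x t + h • w‖) e 0 →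
      P.pair w (x t) ≤ ‖x t‖ * e := by
    intro w e h
    apply hdom
    have h1 := h.tendsto_slope_zero_right
    refine h1.congr fun h => ?_
    simp [div_eq_inv_mul]
  have h1 := lim _ _ key
  have h2 := lim _ _ keyn
  have h3 := P.subadd v (-v) (x t)
  have h4 := P.smul_left 0 le_rfl 0 (x t)
  rw [zero_smul, zero_mul] at h4
  rw [add_neg_cancel, h4] at h3
  linarith
end

section
/- Let (X,‖·‖) be a real normed space with X ≠ {0}, and let ⟦·,·⟧ be a weak pairing on X compatible with the norm satisfying the straight angle property ⟦−x,x⟧ = −‖x‖² for all x. Let A : X → X be a bounded linear operator and μ(A) a real number such that (‖Id+hA‖−1)/h → μ(A) as h → 0⁺ (operator norm). Then Lumer's equality holds: μ(A) = sup{ ⟦Ax,x⟧ : x ∈ X, ‖x‖ = 1 }. -/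
open Filter Topology MeasureTheory

/-- Lumer's equality for a weak pairing compatible with the
norm and satisfying the straight angle property (a regular pairing). -/
theorem lumer_equality_of_straight_angle
    (X : Type*) [NormedAddCommGroup X] [NormedSpace ℝ X] [Nontrivial X]
    (P : WeakPairing X) (hcompat : ∀ x : X, P.pair x x = ‖x‖ ^ 2)
    (hstraight : ∀ x : X, P.pair (-x) x = -‖x‖ ^ 2)
    (A : X →L[ℝ] X) (μ : ℝ)
    (hμ : Tendsto (fun h : ℝ => (‖ContinuousLinearMap.id ℝ X + h • A‖ - 1) / h)
      (𝓝[>] (0:ℝ)) (𝓝 μ)) :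
    μ = sSup {r : ℝ | ∃ x : X, ‖x‖ = 1 ∧ r = P.pair (A x) x} := by
  have hev : ∀ᶠ h : ℝ in 𝓝[>] (0:ℝ), 0 < h := eventually_mem_nhdsWithin
  have hcs : ∀ x y : X, P.pair x y ≤ ‖x‖ * ‖y‖ := by
    intro x y
    have h := P.cauchy_schwarz x y
    rw [hcompat, hcompat, ← mul_pow, Real.sqrt_sq (by positivity)] at h
    exact h
  have hub : ∀ x : X, ‖x‖ = 1 → P.pair (A x) x ≤ μ := by
    intro x hx
    refine ge_of_tendsto hμ ?_
    filter_upwards [hev] with h hh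
    rw [le_div_iff₀ hh]
    have h1 := P.subadd (x + h • A x) (-x) x
    have e : x + h • A x + -x = h • A x := by abel
    rw [e, P.smul_left h hh.le, hstraight, hx] at h1
    have h2 := hcs (x + h • A x) x
    have h3 := (ContinuousLinearMap.id ℝ X + h • A).le_opNorm x
    have e3 : (ContinuousLinearMap.id ℝ X + h • A) x = x + h • A x := by simp
    rw [e3, hx] at h3
    rw [hx] at h2
    linarith
  obtain ⟨x₀, hx₀⟩ := exists_norm_eq X (zero_le_one (α := ℝ))
  symm
  refine IsLUB.csSup_eq ⟨?_, ?_⟩ ⟨_, x₀, hx₀, rfl⟩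
  · rintro r ⟨x, hx, rfl⟩
    exact hub x hx
  · intro s hs
    have hs1 : ∀ x : X, ‖x‖ = 1 → P.pair (A x) x ≤ s := fun x hx => hs ⟨x, hx, rfl⟩
    have hs2 : ∀ x : X, P.pair (A x) x ≤ s * ‖x‖ ^ 2 := by
      intro x
      by_cases hx : x = 0
      · subst hx
        have := hcs (A 0) 0
        simpa using this
      · have hn : 0 < ‖x‖ := norm_pos_iff.mpr hx
        have h1 := hs1 (‖x‖⁻¹ • x) (by rw [norm_smul, norm_inv, norm_norm]; field_simp)
        rw [map_smul, P.smul_left _ (by positivity), P.smul_right _ (by positivity)] at h1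
        have h2 := mul_le_mul_of_nonneg_right h1 (sq_nonneg ‖x‖)
        have e : ‖x‖⁻¹ * (‖x‖⁻¹ * P.pair (A x) x) * ‖x‖ ^ 2 = P.pair (A x) x := by field_simp
        rwa [e] at h2
    have hlow : ∀ h : ℝ, 0 < h → ∀ x : X, (1 - h * s) * ‖x‖ ≤ ‖x - h • A x‖ := by
      intro h hh x
      by_cases hx : x = 0
      · subst hx; simp
      · have hn : 0 < ‖x‖ := norm_pos_iff.mpr hx
        have h1 := P.subadd (x - h • A x) (h • A x) x
        rw [sub_add_cancel, hcompat, P.smul_left h hh.le] at h1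
        have h2 := hcs (x - h • A x) x
        have h3 := mul_le_mul_of_nonneg_left (hs2 x) hh.le
        refine le_of_mul_le_mul_right ?_ hn
        nlinarith
    have hlim : Tendsto (fun h : ℝ => (h * ‖A‖ ^ 2 + s) / (1 - h * s)) (𝓝[>] (0:ℝ)) (𝓝 s) := by
      have hc : ContinuousAt (fun h : ℝ => (h * ‖A‖ ^ 2 + s) / (1 - h * s)) 0 := by
        apply ContinuousAt.div
        · fun_prop
        · fun_prop
        · simp
      have := hc.tendsto
      simp only [zero_mul, zero_add, sub_zero, div_one] at this
      exact this.mono_left nhdsWithin_le_nhds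
    have hpos : ∀ᶠ h : ℝ in 𝓝[>] (0:ℝ), 0 < 1 - h * s := by
      have hc : ContinuousAt (fun h : ℝ => 1 - h * s) 0 := by fun_prop
      exact (hc.eventually (lt_mem_nhds (by simp))).filter_mono nhdsWithin_le_nhds
    refine le_of_tendsto_of_tendsto hμ hlim ?_
    filter_upwards [hev, hpos] with h hh hp
    have hop : ‖ContinuousLinearMap.id ℝ X + h • A‖ ≤ (1 + h ^ 2 * ‖A‖ ^ 2) / (1 - h * s) := by
      refine ContinuousLinearMap.opNorm_le_bound _ (by positivity) ?_
      intro v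
      have h1 := hlow h hh (v + h • A v)
      have e : v + h • A v - h • A (v + h • A v) = v - (h ^ 2) • A (A v) := by
        rw [map_add, map_smul, smul_add, smul_smul, ← pow_two]; abel
      rw [e] at h1
      have h2 := norm_sub_le v ((h ^ 2) • A (A v))
      rw [norm_smul, norm_pow, Real.norm_of_nonneg hh.le] at h2
      have h3 : ‖A (A v)‖ ≤ ‖A‖ * (‖A‖ * ‖v‖) := A.le_opNorm_of_le (A.le_opNorm v)
      have h4 := mul_le_mul_of_nonneg_left h3 (sq_nonneg h)
      have e3 : (ContinuousLinearMap.id ℝ X + h • A) v = v + h • A v := by simp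
      rw [e3, div_mul_eq_mul_div, le_div_iff₀ hp]
      nlinarith
    rw [div_le_div_iff₀ hh hp]
    rw [le_div_iff₀ hp] at hop
    nlinarith
end

section
/- Let (X,‖·‖) be a real normed space with X ≠ {0} and let ⟦·,·⟧₊ denote the upper JMT pairing of the norm. Let A : X → X be a bounded linear operator and μ(A) a real number such that (‖Id+hA‖−1)/h → μ(A) as h → 0⁺ (operator norm). Then μ(A) = sup{ ⟦Ax,x⟧₊ : x ∈ X, ‖x‖ = 1 }. -/
open Filter Topology

/-- the logarithmic norm equals the supremum over unit vectors
of the upper JMT pairing `⟦Ax,x⟧₊`. -/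
theorem lognorm_eq_sup_upper_JMT_pairing
    (X : Type*) [NormedAddCommGroup X] [NormedSpace ℝ X] [Nontrivial X]
    (Jp : X → X → ℝ)
    (hJp : ∀ x y : X, Tendsto (fun h : ℝ => ‖y‖ * ((‖y + h • x‖ - ‖y‖) / h))
      (𝓝[>] (0:ℝ)) (𝓝 (Jp x y)))
    (A : X →L[ℝ] X) (μ : ℝ)
    (hμ : Tendsto (fun h : ℝ => (‖ContinuousLinearMap.id ℝ X + h • A‖ - 1) / h)
      (𝓝[>] (0:ℝ)) (𝓝 μ)) :
    μ = sSup {r : ℝ | ∃ x : X, ‖x‖ = 1 ∧ r = Jp (A x) x} := by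
  have hub : ∀ x : X, ‖x‖ = 1 → Jp (A x) x ≤ μ := by
    intro x hx
    refine le_of_tendsto_of_tendsto (hJp (A x) x) hμ ?_
    filter_upwards [self_mem_nhdsWithin] with h hh
    have hh : 0 < h := hh
    rw [hx, one_mul]
    have := (ContinuousLinearMap.id ℝ X + h • A).le_opNorm x
    rw [hx, mul_one] at this
    simp only [ContinuousLinearMap.add_apply, ContinuousLinearMap.smul_apply,
      ContinuousLinearMap.id_apply] at this
    gcongr
  have hlow : ∀ x : X, ‖x‖ = 1 → ∀ h : ℝ, 0 < h → (1 - ‖x - h • A x‖) / h ≤ Jp (A x) x := by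
    intro x hx h hh
    refine ge_of_tendsto (hJp (A x) x) ?_
    filter_upwards [self_mem_nhdsWithin] with t ht
    have ht : 0 < t := ht
    rw [hx, one_mul, div_le_div_iff₀ hh ht]
    have e : (h + t) • x = h • (x + t • A x) + t • (x - h • A x) := by module
    have h1 : ‖(h + t) • x‖ ≤ h * ‖x + t • A x‖ + t * ‖x - h • A x‖ := by
      rw [e]
      refine (norm_add_le _ _).trans ?_
      rw [norm_smul, norm_smul, Real.norm_of_nonneg hh.le, Real.norm_of_nonneg ht.le]
    rw [norm_smul, Real.norm_of_nonneg (by positivity), hx] at h1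
    linarith
  have hbdd : BddAbove {r : ℝ | ∃ x : X, ‖x‖ = 1 ∧ r = Jp (A x) x} := by
    refine ⟨μ, ?_⟩
    rintro r ⟨x, hx, rfl⟩
    exact hub x hx
  apply le_antisymm
  · set s := sSup {r : ℝ | ∃ x : X, ‖x‖ = 1 ∧ r = Jp (A x) x} with hs
    have h1 : ∀ x : X, ‖x‖ = 1 → ∀ h : ℝ, 0 < h → 1 - h * s ≤ ‖x - h • A x‖ := by
      intro x hx h hh
      have := (hlow x hx h hh).trans (le_csSup hbdd ⟨x, hx, rfl⟩)
      rw [div_le_iff₀ hh] at this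
      linarith
    have h2 : ∀ x : X, ∀ h : ℝ, 0 < h → (1 - h * s) * ‖x‖ ≤ ‖x - h • A x‖ := by
      intro x h hh
      by_cases hx : x = 0
      · simp [hx]
      have hn : 0 < ‖x‖ := norm_pos_iff.2 hx
      have := h1 (‖x‖⁻¹ • x) (by rw [norm_smul, norm_inv, norm_norm]; field_simp) h hh
      rw [map_smul, smul_comm h, ← smul_sub, norm_smul, norm_inv, norm_norm] at this
      rwa [inv_mul_eq_div, le_div_iff₀ hn] at this
    have h3 : ∀ h : ℝ, 0 < h → 0 < 1 - h * s →
        (1 - h * s) * ‖ContinuousLinearMap.id ℝ X + h • A‖ ≤ 1 + h ^ 2 * ‖A‖ ^ 2 := by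
      intro h hh hp
      rw [mul_comm, ← le_div_iff₀ hp]
      refine ContinuousLinearMap.opNorm_le_bound _ (by positivity) fun x => ?_
      rw [div_mul_eq_mul_div, le_div_iff₀ hp, mul_comm]
      refine (h2 _ h hh).trans ?_
      have e : (ContinuousLinearMap.id ℝ X + h • A) x - h • A ((ContinuousLinearMap.id ℝ X + h • A) x)
          = x - (h ^ 2) • A (A x) := by
        simp only [ContinuousLinearMap.add_apply, ContinuousLinearMap.smul_apply,
          ContinuousLinearMap.id_apply, map_add, map_smul]
        module
      rw [e]
      refine (norm_sub_le _ _).trans ?_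
      rw [norm_smul, Real.norm_of_nonneg (by positivity)]
      have : ‖A (A x)‖ ≤ ‖A‖ * (‖A‖ * ‖x‖) := A.le_opNorm_of_le (A.le_opNorm x)
      have := mul_le_mul_of_nonneg_left this (sq_nonneg h)
      linarith
    have hid : Tendsto (fun h : ℝ => h) (𝓝[>] (0:ℝ)) (𝓝 0) := tendsto_nhdsWithin_of_tendsto_nhds tendsto_id
    have hc : Tendsto (fun h : ℝ => 1 - h * s) (𝓝[>] (0:ℝ)) (𝓝 1) := by
      simpa using (hid.mul_const s).const_sub 1
    have hr : Tendsto (fun h : ℝ => s + h * ‖A‖ ^ 2) (𝓝[>] (0:ℝ)) (𝓝 s) := by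
      simpa using (hid.mul_const (‖A‖ ^ 2)).const_add s
    have hl := hc.mul hμ
    rw [one_mul] at hl
    refine le_of_tendsto_of_tendsto hl hr ?_
    filter_upwards [self_mem_nhdsWithin, hc.eventually (lt_mem_nhds one_pos)] with h hh hp
    have hh : 0 < h := hh
    have := h3 h hh hp
    rw [← mul_div_assoc, div_le_iff₀ hh]
    nlinarith
  · obtain ⟨x, hx⟩ := exists_norm_eq X (zero_le_one : (0:ℝ) ≤ 1)
    refine csSup_le ⟨_, x, hx, rfl⟩ ?_
    rintro r ⟨y, hy, rfl⟩
    exact hub y hy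
end

section
/- Let X be a real vector space and [·,·] an LG pairing on X, with induced norm ‖x‖ := sqrt([x,x]). Then the LG pairing is sandwiched between the JMT pairings of this norm: ⟦x,y⟧₋ ≤ [x,y] ≤ ⟦x,y⟧₊ for all x,y ∈ X. -/
open Filter Topology MeasureTheory

/-- An LG (Lumer–Giles) pairing on a real vector space `X`. -/
structure LGPairing (X : Type*) [AddCommGroup X] [Module ℝ X] where
  pair : X → X → ℝ
  add_left : ∀ x₁ x₂ y : X, pair (x₁ + x₂) y = pair x₁ y + pair x₂ y
  smul_left : ∀ (l : ℝ) (x y : X), pair (l • x) y = l * pair x y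
  pos_def : ∀ x : X, x ≠ 0 → 0 < pair x x
  cauchy_schwarz : ∀ x y : X, pair x y ≤ Real.sqrt (pair x x * pair y y)
  smul_right : ∀ (l : ℝ) (x y : X), pair x (l • y) = l * pair x y

/-- an LG pairing is sandwiched between the lower and upper JMT
pairings of its induced norm. -/
theorem LG_pairing_between_JMT_pairings
    (X : Type*) [AddCommGroup X] [Module ℝ X] (L : LGPairing X)
    (N : X → ℝ) (hN : ∀ z : X, N z = Real.sqrt (L.pair z z))
    (Jp Jm : X → X → ℝ)
    (hJp : ∀ x y : X, Tendsto (fun h : ℝ => N y * ((N (y + h • x) - N y) / h))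
      (𝓝[>] (0:ℝ)) (𝓝 (Jp x y)))
    (hJm : ∀ x y : X, Tendsto (fun h : ℝ => N y * ((N (y + h • x) - N y) / h))
      (𝓝[<] (0:ℝ)) (𝓝 (Jm x y))) :
    ∀ x y : X, Jm x y ≤ L.pair x y ∧ L.pair x y ≤ Jp x y := by
  have nn : ∀ z : X, 0 ≤ L.pair z z := by
    intro z
    by_cases hz : z = 0
    · have h := L.smul_left 0 z z
      rw [zero_smul, zero_mul] at h
      subst hz
      exact h.ge
    · exact (L.pos_def z hz).le
  have key : ∀ (x y : X) (h : ℝ), h * L.pair x y ≤ N y * (N (y + h • x) - N y) := by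
    intro x y h
    have h1 := L.cauchy_schwarz (y + h • x) y
    rw [Real.sqrt_mul (nn _), ← hN, ← hN, L.add_left, L.smul_left] at h1
    have h2 : N y * N y = L.pair y y := by rw [hN]; exact Real.mul_self_sqrt (nn y)
    nlinarith
  intro x y
  constructor
  · refine le_of_tendsto (hJm x y) ?_
    filter_upwards [self_mem_nhdsWithin] with h hh
    have hh : h < 0 := hh
    rw [← mul_div_assoc, div_le_iff_of_neg hh]
    linarith [key x y h]
  · refine ge_of_tendsto (hJp x y) ?_
    filter_upwards [self_mem_nhdsWithin] with h hh
    have hh : 0 < h := hh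
    rw [← mul_div_assoc, le_div_iff₀ hh]
    linarith [key x y h]
end

section
/- Let X be a real vector space, [·,·] an LG pairing on X with induced norm ‖x‖ := sqrt([x,x]), and x₀, v ∈ X. Then the following are equivalent: (i) the function t ↦ ‖x₀+tv‖ is constant on ℝ; (ii) [v, x₀+tv] = 0 for almost all t ∈ ℝ (Lebesgue measure); (iii) v = 0. -/
open Filter Topology MeasureTheory

theorem LG_aux_nonneg {X : Type*} [AddCommGroup X] [Module ℝ X] (L : LGPairing X) (x : X) :
    0 ≤ L.pair x x := by
  by_cases h : x = 0
  · have := L.smul_left 0 x x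
    rw [zero_smul] at this
    subst h
    linarith
  · exact (L.pos_def x h).le

theorem LG_aux_cs {X : Type*} [AddCommGroup X] [Module ℝ X] (L : LGPairing X) (x y : X) :
    L.pair x y ≤ Real.sqrt (L.pair x x) * Real.sqrt (L.pair y y) := by
  rw [← Real.sqrt_mul (LG_aux_nonneg L x)]
  exact L.cauchy_schwarz x y

theorem LG_aux_key {X : Type*} [AddCommGroup X] [Module ℝ X] (L : LGPairing X) (x₀ v : X)
    (h : ∀ R : ℝ, ∃ t : ℝ, R < t ∧
      Real.sqrt (L.pair (x₀ + t • v) (x₀ + t • v)) ≤ Real.sqrt (L.pair x₀ x₀)) : v = 0 := by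
  by_contra hv
  have hp := L.pos_def v hv
  have hs := Real.sqrt_pos.2 hp
  obtain ⟨t, ht, hle⟩ := h (2 * Real.sqrt (L.pair x₀ x₀) / Real.sqrt (L.pair v v))
  rw [div_lt_iff₀ hs] at ht
  have h1 := LG_aux_cs L (x₀ + t • v) v
  rw [L.add_left x₀ (t • v) v, L.smul_left] at h1
  have h2 := LG_aux_cs L ((-1 : ℝ) • x₀) v
  simp only [L.smul_left, L.smul_right] at h2
  rw [show (-1 : ℝ) * (-1 * L.pair x₀ x₀) = L.pair x₀ x₀ by ring] at h2
  have h3 := Real.mul_self_sqrt hp.le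
  have h4 := mul_le_mul_of_nonneg_right hle hs.le
  have h5 := mul_lt_mul_of_pos_right ht hs
  rw [mul_assoc t, h3] at h5
  linarith

/-- orthogonality characterization via LG pairings: the norm
`t ↦ ‖x₀ + t v‖` is constant iff `[v, x₀+tv] = 0` for a.e. `t` iff `v = 0`. -/
theorem LG_orthogonality_characterization
    (X : Type*) [AddCommGroup X] [Module ℝ X] (L : LGPairing X)
    (N : X → ℝ) (hN : ∀ z : X, N z = Real.sqrt (L.pair z z))
    (x₀ v : X) :
    ((∀ t : ℝ, N (x₀ + t • v) = N x₀) ↔ v = 0) ∧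
    ((∀ᵐ t ∂(volume : Measure ℝ), L.pair v (x₀ + t • v) = 0) ↔ v = 0) := by
  have hz : ∀ y, L.pair 0 y = 0 := fun y => by
    have := L.smul_left 0 0 y
    rwa [zero_smul, zero_mul] at this
  refine ⟨⟨fun h => ?_, fun h => ?_⟩, ⟨fun h => ?_, fun h => ?_⟩⟩
  · refine LG_aux_key L x₀ v fun R => ⟨R + 1, by linarith, ?_⟩
    rw [← hN, ← hN, h]
  · intro t
    rw [h, smul_zero, add_zero]
  · refine LG_aux_key L x₀ v fun R => ?_
    have hR : ∃ᵐ t ∂(volume : Measure ℝ), t ∈ Set.Ioi R := by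
      rw [frequently_ae_mem_iff]
      simp
    obtain ⟨t, ht, h0⟩ := (hR.and_eventually h).exists
    refine ⟨t, ht, ?_⟩
    have h1 := LG_aux_cs L x₀ (x₀ + t • v)
    have h2 := L.add_left x₀ (t • v) (x₀ + t • v)
    rw [L.smul_left, h0, mul_zero, add_zero] at h2
    rw [← h2] at h1
    have h3 := Real.mul_self_sqrt (LG_aux_nonneg L (x₀ + t • v))
    by_contra! hc
    have h4 := mul_lt_mul_of_pos_right hc ((Real.sqrt_nonneg _).trans_lt hc)
    linarith
  · subst h
    exact Eventually.of_forall fun t => hz _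
end

section
/- Let (X,‖·‖) be a real normed space and ⟦·,·⟧ a weak pairing on X compatible with the norm satisfying the straight angle property ⟦−x,x⟧ = −‖x‖² for all x. If in addition ⟦−x,y⟧ = −⟦x,y⟧ for all x,y ∈ X, then ⟦·,·⟧ is linear in its first argument: ⟦x₁+x₂,y⟧ = ⟦x₁,y⟧ + ⟦x₂,y⟧ and ⟦λx,y⟧ = λ⟦x,y⟧ for all x₁,x₂,x,y ∈ X and λ ∈ ℝ; hence ⟦·,·⟧ is an LG pairing on X. -/
open Filter Topology MeasureTheory

/-- a regular pairing (straight angle property) that is odd in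
its first argument is linear in its first argument and homogeneous in its
second argument, i.e. it is an LG pairing. -/
theorem regular_odd_pairing_is_LG
    (X : Type*) [NormedAddCommGroup X] [NormedSpace ℝ X]
    (P : WeakPairing X) (hcompat : ∀ x : X, P.pair x x = ‖x‖ ^ 2)
    (hstraight : ∀ x : X, P.pair (-x) x = -‖x‖ ^ 2)
    (hodd : ∀ x y : X, P.pair (-x) y = -P.pair x y) :
    (∀ x₁ x₂ y : X, P.pair (x₁ + x₂) y = P.pair x₁ y + P.pair x₂ y) ∧
    (∀ (l : ℝ) (x y : X), P.pair (l • x) y = l * P.pair x y) ∧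
    (∀ (l : ℝ) (x y : X), P.pair x (l • y) = l * P.pair x y) := by
  have hr : ∀ x y : X, P.pair x (-y) = -P.pair x y := fun x y => by
    have h := P.neg_neg_eq (-x) y
    rw [neg_neg, hodd] at h
    exact h
  refine ⟨fun x₁ x₂ y => le_antisymm (P.subadd x₁ x₂ y) ?_, fun l x y => ?_, fun l x y => ?_⟩
  · have h := P.subadd (-x₁) (-x₂) y
    rw [← neg_add, hodd, hodd, hodd] at h
    linarith
  · rcases le_total 0 l with hl | hl
    · exact P.smul_left l hl x y
    · have h := P.smul_left (-l) (neg_nonneg.mpr hl) x y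
      rw [neg_smul, hodd] at h
      linarith
  · rcases le_total 0 l with hl | hl
    · exact P.smul_right l hl x y
    · have h := P.smul_right (-l) (neg_nonneg.mpr hl) x y
      rw [neg_smul, hr] at h
      linarith
end

section
/- Let (X,‖·‖) be a real normed space that is Gateaux differentiable, i.e. for every y ≠ 0 and every x ∈ X the two-sided limit lim_{h→0}(‖y+hx‖−‖y‖)/h exists. Then every weak pairing ⟦·,·⟧ on X compatible with the norm and satisfying the straight angle property ⟦−x,x⟧ = −‖x‖² is uniquely determined: for every x ∈ X and every y ≠ 0, ⟦x,y⟧ = ‖y‖·lim_{h→0}(‖y+hx‖−‖y‖)/h, and ⟦x,0⟧ = 0. -/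
open Filter Topology MeasureTheory

/-- on a Gateaux differentiable normed space, a regular pairing
compatible with the norm is uniquely determined: it equals the (two-sided)
norm derivative pairing `‖y‖ · lim_{h→0}(‖y+hx‖−‖y‖)/h`. -/
theorem regular_pairing_unique_of_gateaux
    (X : Type*) [NormedAddCommGroup X] [NormedSpace ℝ X]
    (hG : ∀ y : X, y ≠ 0 → ∀ x : X, ∃ L : ℝ,
      Tendsto (fun h : ℝ => (‖y + h • x‖ - ‖y‖) / h) (𝓝[≠] (0:ℝ)) (𝓝 L))
    (P : WeakPairing X) (hcompat : ∀ x : X, P.pair x x = ‖x‖ ^ 2)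
    (hstraight : ∀ x : X, P.pair (-x) x = -‖x‖ ^ 2) :
    (∀ x y : X, y ≠ 0 → ∀ L : ℝ,
      Tendsto (fun h : ℝ => (‖y + h • x‖ - ‖y‖) / h) (𝓝[≠] (0:ℝ)) (𝓝 L) →
      P.pair x y = ‖y‖ * L) ∧
    (∀ x : X, P.pair x (0 : X) = 0) := by
  have cs : ∀ x y : X, P.pair x y ≤ ‖x‖ * ‖y‖ := by
    intro x y
    have h := P.cauchy_schwarz x y
    rw [hcompat, hcompat, ← mul_pow, Real.sqrt_sq (by positivity)] at h
    exact h
  refine ⟨?_, ?_⟩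
  · intro x y hy L hL
    have hL' := hL.const_mul ‖y‖
    apply le_antisymm
    · have h1 := hL'.mono_left (nhdsWithin_mono (0:ℝ) (fun a (ha : a ∈ Set.Ioi (0:ℝ)) => ne_of_gt ha))
      refine ge_of_tendsto h1 ?_
      filter_upwards [self_mem_nhdsWithin] with h hh
      have hh : 0 < h := hh
      have e1 := P.subadd (y + h • x) (-y) y
      rw [show y + h • x + -y = h • x by abel, P.smul_left h hh.le, hstraight] at e1
      have e2 := cs (y + h • x) y
      rw [← mul_div_assoc, le_div_iff₀ hh]
      nlinarith
    · have h1 := hL'.mono_left (nhdsWithin_mono (0:ℝ) (fun a (ha : a ∈ Set.Iio (0:ℝ)) => ne_of_lt ha))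
      refine le_of_tendsto h1 ?_
      filter_upwards [self_mem_nhdsWithin] with h hh
      have hh : h < 0 := hh
      have e1 := P.subadd (y + h • x) ((-h) • x) y
      rw [show y + h • x + (-h) • x = y by rw [neg_smul]; abel,
        P.smul_left (-h) (by linarith), hcompat] at e1
      have e2 := cs (y + h • x) y
      rw [← mul_div_assoc, div_le_iff_of_neg hh]
      nlinarith
  · intro x
    have h := P.smul_right 0 le_rfl x 0
    simpa using h
end

section
/- Let ‖·‖ be an arbitrary norm on ℝⁿ and ⟦·,·⟧ a weak pairing on ℝⁿ compatible with this norm and satisfying the straight angle property ⟦−x,x⟧ = −‖x‖² for all x. Then for Lebesgue-almost every y ∈ ℝⁿ, one has ⟦x,y⟧₊ = ⟦x,y⟧₋ = ⟦x,y⟧ for all x ∈ ℝⁿ, where ⟦·,·⟧₊ and ⟦·,·⟧₋ are the upper and lower JMT pairings of ‖·‖. -/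
open Filter Topology MeasureTheory

/-- for an arbitrary norm `N` on `ℝⁿ` and a regular pairing
compatible with it, for Lebesgue-almost every `y` the upper and lower JMT
pairings of `N` coincide with the pairing: the two-sided limit exists and
`⟦x,y⟧ = N(y)·lim_{h→0}(N(y+hx)−N(y))/h` for all `x`. -/
theorem regular_pairing_ae_unique_on_Rn
    (n : ℕ) (N : (Fin n → ℝ) → ℝ)
    (hNpos : ∀ z : Fin n → ℝ, z ≠ 0 → 0 < N z)
    (hNhom : ∀ (α : ℝ) (z : Fin n → ℝ), N (α • z) = |α| * N z)
    (hNtri : ∀ z w : Fin n → ℝ, N (z + w) ≤ N z + N w)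
    (P : WeakPairing (Fin n → ℝ)) (hcompat : ∀ x : Fin n → ℝ, P.pair x x = N x ^ 2)
    (hstraight : ∀ x : Fin n → ℝ, P.pair (-x) x = -N x ^ 2) :
    ∀ᵐ y ∂(volume : Measure (Fin n → ℝ)), ∀ x : Fin n → ℝ, ∃ L : ℝ,
      Tendsto (fun h : ℝ => (N (y + h • x) - N y) / h) (𝓝[≠] (0:ℝ)) (𝓝 L) ∧
      P.pair x y = N y * L := by
  have hN0 : N 0 = 0 := by simpa using hNhom 0 0
  have hNnn : ∀ z, 0 ≤ N z := fun z => by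
    by_cases hz : z = 0
    · rw [hz, hN0]
    · exact (hNpos z hz).le
  have hsum : ∀ (s : Finset (Fin n)) (v : Fin n → (Fin n → ℝ)),
      N (∑ i ∈ s, v i) ≤ ∑ i ∈ s, N (v i) := by
    intro s v
    induction s using Finset.induction_on with
    | empty => simp [hN0]
    | insert a s ha ih =>
      rw [Finset.sum_insert ha, Finset.sum_insert ha]
      exact (hNtri _ _).trans (by linarith)
  set C : ℝ := ∑ i : Fin n, N (Pi.single i 1) with hC
  have hC0 : 0 ≤ C := Finset.sum_nonneg fun i _ => hNnn _
  have hbound : ∀ z : Fin n → ℝ, N z ≤ C * ‖z‖ := by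
    intro z
    have hz : z = ∑ i : Fin n, z i • (Pi.single i (1:ℝ) : Fin n → ℝ) :=
      pi_eq_sum_univ' z
    calc N z = N (∑ i : Fin n, z i • (Pi.single i (1:ℝ) : Fin n → ℝ)) := by rw [← hz]
      _ ≤ ∑ i : Fin n, N (z i • (Pi.single i (1:ℝ) : Fin n → ℝ)) := hsum _ _
      _ ≤ ∑ i : Fin n, N (Pi.single i 1) * ‖z‖ := by
        refine Finset.sum_le_sum fun i _ => ?_
        rw [hNhom, mul_comm]
        exact mul_le_mul_of_nonneg_left (norm_le_pi_norm z i) (hNnn _)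
      _ = C * ‖z‖ := by rw [hC, Finset.sum_mul]
  have hlip : LipschitzWith C.toNNReal N := by
    refine LipschitzWith.of_le_add_mul _ fun z w => ?_
    have h1 := hNtri w (z - w)
    have h2 := hbound (z - w)
    rw [Real.coe_toNNReal _ hC0, dist_eq_norm]
    rw [add_sub_cancel] at h1
    linarith
  filter_upwards [hlip.ae_differentiableAt (μ := volume)] with y hy
  have hlim : ∀ x : Fin n → ℝ,
      Tendsto (fun h : ℝ => (N (y + h • x) - N y) / h) (𝓝[≠] (0:ℝ)) (𝓝 (fderiv ℝ N y x)) := by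
    intro x
    have h1 := (hy.hasFDerivAt.hasLineDerivAt x).tendsto_slope_zero
    refine h1.congr fun h => ?_
    simp [div_eq_inv_mul]
  have hle : ∀ x : Fin n → ℝ, P.pair x y ≤ N y * fderiv ℝ N y x := by
    intro x
    have h1 := ((hlim x).mono_left (nhdsGT_le_nhdsNE (0:ℝ))).const_mul (N y)
    refine ge_of_tendsto h1 ?_
    filter_upwards [self_mem_nhdsWithin] with h hh
    have hh : 0 < h := hh
    have h2 := P.subadd (y + h • x) (-y) y
    have h3 := P.cauchy_schwarz (y + h • x) y
    rw [hcompat, hcompat, ← mul_pow, Real.sqrt_sq (mul_nonneg (hNnn _) (hNnn _))] at h3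
    rw [hstraight, add_neg_cancel_comm, P.smul_left h hh.le] at h2
    rw [← mul_div_assoc, le_div_iff₀ hh]
    nlinarith
  intro x
  refine ⟨_, hlim x, le_antisymm (hle x) ?_⟩
  have h0 : P.pair 0 y = 0 := by simpa using P.smul_left 0 le_rfl 0 y
  have h1 := P.subadd x (-x) y
  have h2 := hle (-x)
  rw [add_neg_cancel, h0] at h1
  rw [map_neg] at h2
  linarith
end

section
/- Equip ℝⁿ with the ℓ∞ norm ‖y‖∞ = max_i |y_i| and for y ∈ ℝⁿ let I∞(y) := { i ∈ {1,…,n} : |y_i| = ‖y‖∞ }. Then for all x, y ∈ ℝⁿ, the function h ↦ ‖y‖∞·(‖y+hx‖∞ − ‖y‖∞)/h converges, as h → 0⁺, to max_{i ∈ I∞(y)} x_i·y_i. In other words, the max pairing ⟦x,y⟧∞ := max_{i ∈ I∞(y)} x_i y_i equals the upper JMT pairing of the ℓ∞ norm. -/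
open Filter Topology

/-- the max pairing `⟦x,y⟧∞ = max_{i ∈ I∞(y)} x_i y_i` is the
upper JMT pairing of the `ℓ∞` norm on `ℝⁿ`. -/
theorem max_pairing_is_upper_JMT
    (n : ℕ) [Nonempty (Fin n)] (x y : Fin n → ℝ)
    (N : (Fin n → ℝ) → ℝ) (hN : ∀ z : Fin n → ℝ, N z = ⨆ i, |z i|) :
    Tendsto (fun h : ℝ => N y * ((N (y + h • x) - N y) / h)) (𝓝[>] (0:ℝ))
      (𝓝 (sSup {r : ℝ | ∃ i : Fin n, |y i| = N y ∧ r = x i * y i})) := by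
  have hle : ∀ (z : Fin n → ℝ) i, |z i| ≤ N z := by
    intro z i
    rw [hN]
    exact le_ciSup (f := fun i => |z i|) (Set.finite_range _).bddAbove i
  have hat : ∀ z : Fin n → ℝ, ∃ i, |z i| = N z := by
    intro z
    rw [hN]
    exact exists_eq_ciSup_of_finite (f := fun i => |z i|)
  set A := {r : ℝ | ∃ i : Fin n, |y i| = N y ∧ r = x i * y i} with hA
  have hfin : A.Finite := by
    apply (Set.finite_range (fun i => x i * y i)).subset
    rintro r ⟨i, _, rfl⟩
    exact ⟨i, rfl⟩
  have hne : A.Nonempty := by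
    obtain ⟨i, hi⟩ := hat y
    exact ⟨_, i, hi, rfl⟩
  obtain ⟨i0, hi0, hS⟩ := hne.csSup_mem hfin
  have hmax : ∀ i, |y i| = N y → x i * y i ≤ sSup A := fun i hi =>
    le_csSup hfin.bddAbove ⟨i, hi, rfl⟩
  generalize sSup A = S at *
  have hM0 : 0 ≤ N y := (abs_nonneg _).trans (hle y i0)
  rcases hM0.eq_or_lt with hM | hM
  · have : y i0 = 0 := by rw [← abs_eq_zero, hi0, ← hM]
    rw [hS, this, ← hM]
    simp
  have key : ∀ i, |y i| = N y → ∀ᶠ h in 𝓝 (0:ℝ),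
      N y * |y i + h * x i| = N y ^ 2 + h * (x i * y i) := by
    intro i hi
    have hc : ContinuousAt (fun h : ℝ => N y ^ 2 + h * (x i * y i)) 0 := by fun_prop
    have hp := hc.eventually_const_lt (u := 0) (by simp; positivity)
    filter_upwards [hp] with h hh
    have e : N y ^ 2 + h * (x i * y i) = y i * (y i + h * x i) := by
      rw [← hi, sq_abs]; ring
    rw [e] at hh ⊢
    rw [← abs_of_pos hh, abs_mul, hi]
  have all : ∀ i, ∀ᶠ h in 𝓝[>] (0:ℝ), N y * |y i + h * x i| ≤ N y ^ 2 + h * S := by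
    intro i
    by_cases hi : |y i| = N y
    · filter_upwards [nhdsWithin_le_nhds (key i hi), self_mem_nhdsWithin] with h hh hpos
      have hpos : 0 < h := hpos
      rw [hh]
      have := mul_le_mul_of_nonneg_left (hmax i hi) hpos.le
      linarith
    · have hlt := lt_of_le_of_ne (hle y i) hi
      have hc : ContinuousAt (fun h : ℝ => N y ^ 2 + h * S - N y * |y i + h * x i|) 0 := by
        fun_prop
      have hp := hc.eventually_const_lt (u := 0) (by simp; nlinarith)
      filter_upwards [nhdsWithin_le_nhds hp] with h hh
      linarith
  refine tendsto_const_nhds.congr' ?_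
  filter_upwards [eventually_all.2 all, nhdsWithin_le_nhds (key i0 hi0),
    self_mem_nhdsWithin] with h h1 h2 hpos
  have hpos : 0 < h := hpos
  have e : N y * N (y + h • x) = N y ^ 2 + h * S := by
    apply le_antisymm
    · obtain ⟨j, hj⟩ := hat (y + h • x)
      rw [← hj]
      simpa using h1 j
    · rw [hS, ← h2]
      have := hle (y + h • x) i0
      simp only [Pi.add_apply, Pi.smul_apply, smul_eq_mul] at this
      exact mul_le_mul_of_nonneg_left this hM0
  rw [← mul_div_assoc, eq_div_iff hpos.ne']
  linarith
end

section
/- Let (X,‖·‖) be a real normed space and ⟦·,·⟧ a weak pairing on X compatible with the norm and satisfying the straight angle property ⟦−x,x⟧ = −‖x‖² for all x (a regular pairing). Let C ⊆ X be a convex set, b ∈ ℝ, t₀ ∈ ℝ, and f : ℝ × X → X satisfy the one-sided Lipschitz condition ⟦f(t,u) − f(t,w), u − w⟧ ≤ b·‖u−w‖² for all u,w ∈ C and t ≥ t₀. Let x, y : [t₀,∞) → X be differentiable curves with x′(t) = f(t,x(t)), y′(t) = f(t,y(t)) and x(t), y(t) ∈ C for all t ≥ t₀. Then for all t₀ ≤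 s ≤ t: ‖x(t) − y(t)‖ ≤ e^{b(t−s)}·‖x(s) − y(s)‖. -/
open Filter Topology MeasureTheory

/-- contraction estimate: if the vector field satisfies a
one-sided Lipschitz condition with constant `b` with respect to a regular
pairing, then any two solutions approach each other at rate `e^{b(t-s)}`. -/
theorem contraction_of_one_sided_lipschitz
    (X : Type*) [NormedAddCommGroup X] [NormedSpace ℝ X]
    (P : WeakPairing X) (hcompat : ∀ x : X, P.pair x x = ‖x‖ ^ 2)
    (hstraight : ∀ x : X, P.pair (-x) x = -‖x‖ ^ 2)
    (C : Set X) (hC : Convex ℝ C) (b t₀ : ℝ) (f : ℝ → X → X)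
    (hOSL : ∀ t : ℝ, t₀ ≤ t → ∀ u ∈ C, ∀ w ∈ C,
      P.pair (f t u - f t w) (u - w) ≤ b * ‖u - w‖ ^ 2)
    (x y : ℝ → X)
    (hx : ∀ t : ℝ, t₀ ≤ t → HasDerivAt x (f t (x t)) t)
    (hy : ∀ t : ℝ, t₀ ≤ t → HasDerivAt y (f t (y t)) t)
    (hxC : ∀ t : ℝ, t₀ ≤ t → x t ∈ C) (hyC : ∀ t : ℝ, t₀ ≤ t → y t ∈ C) :
    ∀ s t : ℝ, t₀ ≤ s → s ≤ t →
      ‖x t - y t‖ ≤ Real.exp (b * (t - s)) * ‖x s - y s‖ := by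
  intro s t hs hst
  have hCS : ∀ a c : X, P.pair a c ≤ ‖a‖ * ‖c‖ := by
    intro a c
    have h := P.cauchy_schwarz a c
    rw [hcompat, hcompat, ← mul_pow, Real.sqrt_sq (by positivity)] at h
    exact h
  have hZ : ∀ τ : ℝ, t₀ ≤ -τ → HasDerivAt (fun σ : ℝ => -(x (-σ) - y (-σ)))
      (f (-τ) (x (-τ)) - f (-τ) (y (-τ))) τ := by
    intro τ hτ
    have h1 := ((hx (-τ) hτ).sub (hy (-τ) hτ))
    have h2 := (h1.scomp τ (hasDerivAt_neg τ)).neg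
    rw [neg_smul, one_smul, neg_neg] at h2
    exact h2
  have key := le_gronwallBound_of_liminf_deriv_right_le
    (f := fun σ : ℝ => -‖x (-σ) - y (-σ)‖)
    (f' := fun σ : ℝ => b * ‖x (-σ) - y (-σ)‖)
    (δ := -‖x t - y t‖) (K := -b) (ε := 0) (a := -t) (b := -s)
    (by
      intro τ hτ
      have h := (hZ τ (by linarith [hτ.2])).continuousAt.norm.neg
      simp only [norm_neg] at h
      exact h.continuousWithinAt)
    (by
      intro τ hτ r hr
      apply Filter.Eventually.frequently
      have hτ0 : t₀ ≤ -τ := by linarith [hτ.2]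
      have hd := (hasDerivAt_iff_tendsto_slope.1 (hZ τ hτ0)).mono_left
        (nhdsWithin_mono τ (fun z (hz : τ < z) => ne_of_gt hz))
      have hev := (Metric.tendsto_nhds.1 hd) (r - b * ‖x (-τ) - y (-τ)‖) (by linarith)
      filter_upwards [hev, self_mem_nhdsWithin] with σ hσ hστ
      have hh : 0 < σ - τ := sub_pos.2 hστ
      rw [inv_mul_lt_iff₀ hh]
      have hO := hOSL (-τ) hτ0 _ (hxC _ hτ0) _ (hyC _ hτ0)
      rw [dist_eq_norm] at hσ
      have hq : (σ - τ) • slope (fun σ : ℝ => -(x (-σ) - y (-σ))) τ σ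
          = (x (-τ) - y (-τ)) - (x (-σ) - y (-σ)) := by
        rw [sub_smul_slope, vsub_eq_sub]; abel
      generalize slope (fun σ : ℝ => -(x (-σ) - y (-σ))) τ σ = q at hσ hq
      generalize f (-τ) (x (-τ)) - f (-τ) (y (-τ)) = v at hO hσ
      generalize x (-τ) - y (-τ) = z at *
      generalize x (-σ) - y (-σ) = w at *
      generalize σ - τ = h at *
      have h1 := P.subadd w (h • q) z
      rw [hq, add_sub_cancel, hcompat, ← hq, P.smul_left _ hh.le] at h1
      have h2 := P.subadd v (q - v) z
      rw [add_sub_cancel] at h2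
      have h3 := hCS (q - v) z
      have h4 := hCS w z
      rcases (norm_nonneg z).eq_or_lt with h0 | h0
      · rw [← h0] at hr ⊢
        have : 0 < h * r := mul_pos hh (by linarith)
        linarith [norm_nonneg w]
      · have h5 : P.pair q z ≤ b * ‖z‖ ^ 2 + ‖q - v‖ * ‖z‖ := by linarith
        have h6 := mul_le_mul_of_nonneg_left h5 hh.le
        have h7 : ‖z‖ * ‖z‖ ≤ (‖w‖ + h * (b * ‖z‖ + ‖q - v‖)) * ‖z‖ := by nlinarith
        have h8 := le_of_mul_le_mul_right h7 h0
        have h9 : h * (b * ‖z‖ + ‖q - v‖) < h * r := mul_lt_mul_of_pos_left (by linarith) hh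
        linarith)
    (by simp) (by intro τ _; simp) (-s) ⟨by linarith, le_refl _⟩
  rw [gronwallBound_ε0] at key
  simp only [neg_neg] at key
  have e : -b * (-s - -t) = -(b * (t - s)) := by ring
  rw [e, Real.exp_neg] at key
  have h1 : ‖x t - y t‖ * (Real.exp (b * (t - s)))⁻¹ ≤ ‖x s - y s‖ := by linarith
  rw [← div_eq_mul_inv, div_le_iff₀ (Real.exp_pos _)] at h1
  linarith
end
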